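/- Let (X, d) be a proper, uniquely geodesic, straight metric space which is C¹ along geodesics and has constant distance variation. Let E = ∏_{b ∈ X} X̄_b be the product of the visual compactifications of X based at all points b ∈ X, with the product topology, let i : X → E be the diagonal embedding (π_b(i(x)) = x for all b), and let V̂ be the closure of i(X) in E. Let F̂ be the map from the horofunction compactification of X to E whose b-th component is the continuous surjection Π_b onto X̄_b (so that π_b ∘ F̂ = Π_b for every b, where Π_b(h(x)) = x and Π_b sends each point of the horoboundary to its optimal geodesic ray based at b). Then F̂ is a homeomorphism from the horofunction compactification of X onto V̂; in particular, the two compactifications of X are isomorphic. -/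

import Mathlib

/-!
Write `H` for the horofunction compactification, the closure of `{horo b₀ x}`. By Arzelà–Ascoli `H`
is compact, so it is enough to show that `Fhat` is continuous and injective into a Hausdorff space;
it is then a closed embedding, and its range is the closure of the image of the dense set
`{horo b₀ x}`, which is `i(X)`.

*Optimal points.* All elements of `H` are 1-Lipschitz. Call `p` optimal for `ξ ∈ H` from `b` if
`ξ p = ξ b - d(b, p)`. Extending the segments `[x, b]` a unit beyond `b` and passing to a limit gives
a point `w` with `d(w, b) = 1` and `ξ w = ξ b + 1` (`exists_behind`). Since `ξ` is 1-Lipschitz, `b`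
lies metrically between `w` and any optimal point `p`, so by straightness `p` lies on the line from
`w` through `b` (`exists_optimal_line`). Hence an optimal point is determined by its distance from
`b`, which gives the uniqueness of optimal rays.

*Continuity.* The visual compactification based at `b` is a closed subspace of `[0, ∞] × X^[0, ∞)`
through the radius and the points at distance `min r s` from `b` (`isClosedEmbedding_vis`). Under the
projection of `H` these points are optimal; optimality is a closed condition, so by the uniqueness
above and properness the projection is continuous (`continuous_of_isProjection`).

*Injectivity.* Radii separate points of `X` from each other and from horofunctions. For a
horofunction `ξ = lim horo b₀ x` and a line `γ`, constant distance variation says that the derivative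
of `d(γ t, x)` equals that of `d(γ t, y)`, where `y` is the point at distance `1` on the segment from
`γ t` to `x`. As `horo b₀ x` tends to `ξ` and `t` to `t₀`, the points `y` converge to the point at
distance `1` on the optimal ray from `γ t₀`. With the C¹ condition this shows that `ξ ∘ γ` is
differentiable with derivative determined by the optimal ray (`hasDerivAt_horofunction`), as long as
that ray does not run along `γ`; if it does, the slope of `ξ` on it is `-1`. So horofunctions with
the same optimal rays have the same increments along every line (`eq_of_isOptimal_iff`).
-/

open Filter Topology
open scoped NNReal ENNReal

variable {X : Type*} [MetricSpace X]

/-- `γ` restricted to the set `s ⊆ ℝ` is a (unit-speed) geodesic: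
`dist (γ u) (γ v) = |u - v|` for all `u, v ∈ s`. -/
def IsGeodesicOn (γ : ℝ → X) (s : Set ℝ) : Prop :=
  ∀ u ∈ s, ∀ v ∈ s, dist (γ u) (γ v) = |u - v|

/-- `X` is uniquely geodesic: any two distinct points are joined by a geodesic
parametrized on `[0, dist a c]`, and any two such geodesics agree on that interval. -/
def UniquelyGeodesic (X : Type*) [MetricSpace X] : Prop :=
  ∀ a c : X, a ≠ c →
    ∃ γ : ℝ → X,
      (IsGeodesicOn γ (Set.Icc 0 (dist a c)) ∧ γ 0 = a ∧ γ (dist a c) = c) ∧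
        ∀ γ' : ℝ → X,
          (IsGeodesicOn γ' (Set.Icc 0 (dist a c)) ∧ γ' 0 = a ∧ γ' (dist a c) = c) →
            Set.EqOn γ' γ (Set.Icc 0 (dist a c))

/-- `X` is straight: every geodesic defined on a nondegenerate closed interval extends to a
unique bi-infinite geodesic (an isometric embedding of `ℝ`). -/
def Straight (X : Type*) [MetricSpace X] : Prop :=
  ∀ (γ : ℝ → X) (a c : ℝ), a < c → IsGeodesicOn γ (Set.Icc a c) →
    ∃! γ' : ℝ → X, Isometry γ' ∧ Set.EqOn γ' γ (Set.Icc a c)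

/-- The space `D_b` of geodesic rays based at `b`, as a subspace of `C(ℝ≥0, X)`
(with the compact-open topology, i.e. uniform convergence on compact sets). -/
abbrev GeodesicRay (X : Type*) [MetricSpace X] (b : X) :=
  {γ : C(ℝ≥0, X) // Isometry ⇑γ ∧ γ 0 = b}

/-- The horofunction embedding `h : X → C(X, ℝ)`, `h x y = d(x, y) - d(x, b)`. -/
noncomputable def horo (b x : X) : C(X, ℝ) :=
  ⟨fun y => dist x y - dist x b,
    (continuous_const.dist continuous_id).sub continuous_const⟩

/-- The horoboundary of `X` (with basepoint `b`): the closure of `h(X)` in `C(X, ℝ)`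
minus `h(X)`. -/
def horoboundary (b : X) : Set C(X, ℝ) :=
  closure (Set.range (horo b)) \ Set.range (horo b)

/-- The setoid on `D_b × M` identifying all points whose second coordinate is `0`. -/
def collapseSetoid (X : Type*) [MetricSpace X] (b : X) (M : Type*) [Zero M] :
    Setoid (GeodesicRay X b × M) where
  r p q := p = q ∨ (p.2 = 0 ∧ q.2 = 0)
  iseqv := by
    refine ⟨fun _ => Or.inl rfl, ?_, ?_⟩
    · rintro p q (rfl | ⟨h1, h2⟩)
      · exact Or.inl rfl
      · exact Or.inr ⟨h2, h1⟩
    · rintro p q r (rfl | ⟨h1, h2⟩) (rfl | ⟨h3, h4⟩)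
      · exact Or.inl rfl
      · exact Or.inr ⟨h3, h4⟩
      · exact Or.inr ⟨h1, h2⟩
      · exact Or.inr ⟨h1, h4⟩

/-- The visual compactification `X̄_b = (D_b × [0, ∞]) / (D_b × {0})`. -/
abbrev VisualCompactification (X : Type*) [MetricSpace X] (b : X) :=
  Quotient (collapseSetoid X b ℝ≥0∞)

/-- `X` is C¹ along geodesics: for a bi-infinite geodesic `γ` and a point `p` off `γ`,
`t ↦ d(γ t, p)` is differentiable, and the derivative depends continuously on `(t, p)`. -/
def C1AlongGeodesics (X : Type*) [MetricSpace X] : Prop :=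
  ∀ γ : ℝ → X, Isometry γ →
    (∀ p, p ∉ Set.range γ → ∀ t : ℝ, DifferentiableAt ℝ (fun s => dist (γ s) p) t) ∧
      ContinuousOn (fun q : ℝ × X => deriv (fun s => dist (γ s) q.2) q.1)
        {q : ℝ × X | q.2 ∉ Set.range γ}

/-- `X` has constant distance variation: for distinct bi-infinite geodesics `γ, η` with
`γ 0 = η 0`, either `(d/dt) d(γ t, η s)|_{t=0}` exists for all `s > 0` and is independent
of `s`, or it exists for no `s > 0`. -/
def ConstantDistanceVariation (X : Type*) [MetricSpace X] : Prop :=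
  ∀ γ η : ℝ → X, Isometry γ → Isometry η → γ 0 = η 0 → γ ≠ η →
    ((∀ s : ℝ, 0 < s → DifferentiableAt ℝ (fun t => dist (γ t) (η s)) 0) ∧
        ∀ s s' : ℝ, 0 < s → 0 < s' →
          deriv (fun t => dist (γ t) (η s)) 0 = deriv (fun t => dist (γ t) (η s')) 0) ∨
      ∀ s : ℝ, 0 < s → ¬ DifferentiableAt ℝ (fun t => dist (γ t) (η s)) 0

/-! ### Compactness of spaces of 1-Lipschitz maps -/

section Compactness

/-- Arzelà–Ascoli: maps that are 1-Lipschitz and take a prescribed value at one point form a compact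
set when the target is proper. -/
theorem isCompact_lipschitz {Y Z : Type*} [MetricSpace Y] [MetricSpace Z] [ProperSpace Z]
    (y₀ : Y) (z₀ : Z) :
    IsCompact {f : C(Y, Z) | LipschitzWith 1 f ∧ f y₀ = z₀} := by
  apply ArzelaAscoli.isCompact_of_equicontinuous
  · have himg : (ContinuousMap.toFun '' {f : C(Y, Z) | LipschitzWith 1 f ∧ f y₀ = z₀}) =
        {f : Y → Z | (∀ x y, dist (f x) (f y) ≤ dist x y) ∧ f y₀ = z₀} := by
      ext f
      constructor
      · rintro ⟨g, ⟨hg, hg0⟩, rfl⟩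
        exact ⟨fun x y => by simpa using hg.dist_le_mul x y, hg0⟩
      · rintro ⟨hf, hf0⟩
        have hL : LipschitzWith 1 f := LipschitzWith.of_dist_le_mul (by simpa using hf)
        exact ⟨⟨f, hL.continuous⟩, ⟨hL, hf0⟩, rfl⟩
    rw [himg]
    refine IsCompact.of_isClosed_subset
      (isCompact_univ_pi fun y => isCompact_closedBall z₀ (dist y y₀)) ?_ ?_
    · have : {f : Y → Z | (∀ x y, dist (f x) (f y) ≤ dist x y) ∧ f y₀ = z₀} =
          (⋂ x, ⋂ y, {f : Y → Z | dist (f x) (f y) ≤ dist x y}) ∩ {f : Y → Z | f y₀ = z₀} := by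
        ext f; simp
      rw [this]
      refine IsClosed.inter (isClosed_iInter fun x => isClosed_iInter fun y => ?_) ?_
      · exact isClosed_le ((continuous_apply x).dist (continuous_apply y)) continuous_const
      · exact isClosed_eq (continuous_apply y₀) continuous_const
    · rintro f ⟨hf, hf0⟩ y -
      simpa [hf0] using hf y y₀
  · exact (LipschitzWith.uniformEquicontinuous _ 1 fun f => f.2.1).equicontinuous

theorem compactSpace_geodesicRay [ProperSpace X] (b : X) : CompactSpace (GeodesicRay X b) := by
  have hset : {γ : C(ℝ≥0, X) | Isometry ⇑γ ∧ γ 0 = b} =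
      {γ : C(ℝ≥0, X) | LipschitzWith 1 γ ∧ γ 0 = b} ∩
        ⋂ s, ⋂ t, {γ : C(ℝ≥0, X) | dist (γ s) (γ t) = dist s t} := by
    ext γ
    simp only [Set.mem_ofPred_eq, Set.mem_inter_iff, Set.mem_iInter]
    constructor
    · rintro ⟨h, h0⟩
      exact ⟨⟨h.lipschitz, h0⟩, fun s t => h.dist_eq s t⟩
    · rintro ⟨⟨-, h0⟩, h⟩
      exact ⟨Isometry.of_dist_eq h, h0⟩
  have hc : IsCompact {γ : C(ℝ≥0, X) | Isometry ⇑γ ∧ γ 0 = b} := by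
    rw [hset]
    refine (isCompact_lipschitz 0 b).inter_right
      (isClosed_iInter fun s => isClosed_iInter fun t => ?_)
    exact isClosed_eq ((continuous_eval_const s).dist
      (continuous_eval_const t)) continuous_const
  exact isCompact_iff_compactSpace.mp hc

@[simp] theorem horo_apply (b x y : X) : horo b x y = dist x y - dist x b := rfl

theorem lipschitz_horo (b x : X) : LipschitzWith 1 (horo b x) := by
  refine LipschitzWith.of_dist_le_mul fun y z => ?_
  simp only [horo_apply, NNReal.coe_one, one_mul, Real.dist_eq]
  rw [abs_le]
  constructor <;> linarith [dist_triangle x y z, dist_triangle x z y, dist_comm y z]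

/-- Points of the horofunction compactification are 1-Lipschitz and vanish at the basepoint, so the
compactification is a closed subset of a compact set. -/
theorem closure_horo_subset (b : X) :
    closure (Set.range (horo b)) ⊆ {f : C(X, ℝ) | LipschitzWith 1 f ∧ f b = 0} := by
  refine closure_minimal ?_ ?_
  · rintro _ ⟨x, rfl⟩
    exact ⟨lipschitz_horo b x, by simp⟩
  · exact (isCompact_lipschitz b (0 : ℝ)).isClosed

theorem compactSpace_horo (b : X) :
    CompactSpace {f : C(X, ℝ) // f ∈ closure (Set.range (horo b))} :=
  isCompact_iff_compactSpace.mp <|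
    (isCompact_lipschitz b (0 : ℝ)).of_isClosed_subset isClosed_closure (closure_horo_subset b)

theorem continuous_horo (b : X) : Continuous (horo b) := by
  apply ContinuousMap.continuous_of_continuous_uncurry
  exact (continuous_fst.dist continuous_snd).sub (continuous_fst.dist continuous_const)

theorem horo_injective (b : X) : Function.Injective (horo b) := by
  intro x y h
  have h1 := DFunLike.congr_fun h x
  have h2 := DFunLike.congr_fun h y
  simp only [horo_apply, dist_self] at h1 h2
  have := dist_comm x y
  exact dist_le_zero.mp (by linarith)

/-- Every point of the closure is a pointwise limit of `horo b x` as `x` runs along some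
ultrafilter on `X`. -/
theorem exists_ultrafilter_horo {b : X} {ξ : C(X, ℝ)} (h : ξ ∈ closure (Set.range (horo b))) :
    ∃ 𝓤 : Ultrafilter X, Tendsto (horo b) 𝓤 (𝓝 ξ) := by
  have : NeBot (comap (horo b) (𝓝 ξ)) := by
    rw [comap_neBot_iff]
    intro t ht
    obtain ⟨_, hft, x, rfl⟩ := mem_closure_iff_nhds.mp h t ht
    exact ⟨x, hft⟩
  exact ⟨Ultrafilter.of _, tendsto_iff_comap.mpr (Ultrafilter.of_le _)⟩

/-- Bounded families in a proper space converge along ultrafilters. -/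
theorem exists_tendsto_of_bounded [ProperSpace X] {ι : Type*} (𝓤 : Ultrafilter ι) (f : ι → X)
    (b : X) (R : ℝ) (h : ∀ᶠ i in (𝓤 : Filter ι), dist b (f i) ≤ R) :
    ∃ p, Tendsto f 𝓤 (𝓝 p) := by
  have := (isCompact_closedBall b R).ultrafilter_le_nhds (𝓤.map f) (by
    rw [Ultrafilter.coe_map, le_principal_iff, mem_map]
    filter_upwards [h] with i hi
    simpa [dist_comm] using hi)
  obtain ⟨p, -, hp⟩ := this
  exact ⟨p, hp⟩

/-- Evaluation at moving points is continuous on families of 1-Lipschitz functions converging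
pointwise. -/
theorem tendsto_eval {ι : Type*} {l : Filter ι} {f : ι → C(X, ℝ)} {ξ : C(X, ℝ)}
    {p : ι → X} {q : X} (hf : Tendsto f l (𝓝 ξ)) (hL : ∀ i, LipschitzWith 1 (f i))
    (hp : Tendsto p l (𝓝 q)) : Tendsto (fun i => f i (p i)) l (𝓝 (ξ q)) := by
  have h1 : Tendsto (fun i => f i q) l (𝓝 (ξ q)) :=
    ((continuous_eval_const q).tendsto ξ).comp hf
  refine h1.congr_dist ?_
  have h2 : Tendsto (fun i => dist q (p i)) l (𝓝 0) := by
    simpa using (tendsto_const_nhds (x := q)).dist hp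
  exact squeeze_zero (fun _ => dist_nonneg) (fun i => by simpa using (hL i).dist_le_mul q (p i)) h2

end Compactness

/-! ### Lines -/

section Lines

theorem Isometry.isGeodesicOn {γ : ℝ → X} (h : Isometry γ) (s : Set ℝ) : IsGeodesicOn γ s :=
  fun u _ v _ => by rw [h.dist_eq, Real.dist_eq]

theorem isometry_shift {γ : ℝ → X} (h : Isometry γ) (s : ℝ) : Isometry fun u => γ (s + u) :=
  Isometry.of_dist_eq fun u v => by simp [h.dist_eq]

theorem isometry_reflect {γ : ℝ → X} (h : Isometry γ) (s : ℝ) : Isometry fun u => γ (s - u) :=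
  Isometry.of_dist_eq fun u v => by rw [h.dist_eq, dist_sub_left]

theorem exists_line (hU : UniquelyGeodesic X) (hS : Straight X) {a c : X} (h : a ≠ c) :
    ∃ σ : ℝ → X, Isometry σ ∧ σ 0 = a ∧ σ (dist a c) = c := by
  obtain ⟨γ, ⟨hγ, h0, h1⟩, -⟩ := hU a c h
  have hpos : 0 < dist a c := dist_pos.mpr h
  obtain ⟨σ, ⟨hσ, he⟩, -⟩ := hS γ 0 (dist a c) hpos hγ
  refine ⟨σ, hσ, ?_, ?_⟩
  · rw [he (Set.left_mem_Icc.mpr hpos.le), h0]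
  · rw [he (Set.right_mem_Icc.mpr hpos.le), h1]

/-- Two lines with the same parametrization at two different times coincide. -/
theorem line_unique (hU : UniquelyGeodesic X) (hS : Straight X) {σ τ : ℝ → X}
    (hσ : Isometry σ) (hτ : Isometry τ) {s t : ℝ} (hst : s < t) (h1 : σ s = τ s)
    (h2 : σ t = τ t) : σ = τ := by
  have hd : dist (σ s) (σ t) = t - s := by
    rw [hσ.dist_eq, Real.dist_eq, abs_sub_comm, abs_of_pos (sub_pos.mpr hst)]
  have hne : σ s ≠ σ t := fun h => hst.ne (hσ.injective h)
  obtain ⟨γ, -, hγ⟩ := hU (σ s) (σ t) hne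
  rw [hd] at hγ
  have e1 := hγ (fun u => σ (s + u))
    ⟨(isometry_shift hσ s).isGeodesicOn _, by simp, by simp⟩
  have e2 := hγ (fun u => τ (s + u))
    ⟨(isometry_shift hτ s).isGeodesicOn _, by simp [h1], by simp [h2]⟩
  have he : Set.EqOn τ σ (Set.Icc s t) := by
    intro u hu
    have hu' : u - s ∈ Set.Icc 0 (t - s) := ⟨by linarith [hu.1], by linarith [hu.2]⟩
    have := (e2 hu').trans (e1 hu').symm
    simpa using this
  exact (hS σ s t hst (hσ.isGeodesicOn _)).unique ⟨hσ, fun _ _ => rfl⟩ ⟨hτ, he⟩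

/-- If `b` lies metrically between `a` and `c`, then the line through `a` and `b` passes
through `c`: the concatenation of `[a, b]` and `[b, c]` is a geodesic. -/
theorem line_between (hU : UniquelyGeodesic X) (hS : Straight X) {a b c : X} (hab : a ≠ b)
    (hd : dist a b + dist b c = dist a c) {σ : ℝ → X} (hσ : Isometry σ) (h0 : σ 0 = a)
    (h1 : σ (dist a b) = b) : σ (dist a c) = c := by
  by_cases hbc : b = c
  · rw [← hbc, h1]
  have hpab : 0 < dist a b := dist_pos.mpr hab
  have hpbc : 0 < dist b c := dist_pos.mpr hbc
  have hac : a ≠ c := dist_pos.mp (by linarith)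
  obtain ⟨ρ', hρ', r0, r1⟩ := exists_line hU hS hbc
  obtain ⟨ω, hω, w0, w1⟩ := exists_line hU hS hac
  set ρ : ℝ → X := fun u => ρ' (-dist a b + u) with hρdef
  have hρ : Isometry ρ := isometry_shift hρ' _
  have ρ0 : ρ (dist a b) = b := by simp [hρdef, r0]
  have ρ1 : ρ (dist a c) = c := by simp [hρdef, ← hd, r1]
  set π : ℝ → X := fun u => if u ≤ dist a b then σ u else ρ u with hπdef
  -- the only nontrivial case of the geodesic property: one parameter on each side of the break
  have key : ∀ u v, 0 ≤ u → u ≤ dist a b → dist a b ≤ v → v ≤ dist a c →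
      dist (σ u) (ρ v) = v - u := by
    intro u v hu0 hu hv hvc
    have e1 : dist (σ u) b = dist a b - u := by
      conv_lhs => rw [← h1]
      rw [hσ.dist_eq, Real.dist_eq, abs_sub_comm, abs_of_nonneg (by linarith)]
    have e2 : dist b (ρ v) = v - dist a b := by
      conv_lhs => rw [← ρ0]
      rw [hρ.dist_eq, Real.dist_eq, abs_sub_comm, abs_of_nonneg (by linarith)]
    have e3 : dist a (σ u) = u := by
      rw [← h0, hσ.dist_eq, Real.dist_eq, zero_sub, abs_neg, abs_of_nonneg hu0]
    have e4 : dist (ρ v) c = dist a c - v := by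
      conv_lhs => rw [← ρ1]
      rw [hρ.dist_eq, Real.dist_eq, abs_sub_comm, abs_of_nonneg (by linarith)]
    have t1 := dist_triangle (σ u) b (ρ v)
    have t2 := dist_triangle a (σ u) c
    have t3 := dist_triangle (σ u) (ρ v) c
    linarith
  have hπ : IsGeodesicOn π (Set.Icc 0 (dist a c)) := by
    intro u hu v hv
    simp only [hπdef]
    split_ifs with h h' h'
    · rw [hσ.dist_eq, Real.dist_eq]
    · rw [key u v hu.1 h (not_le.mp h').le hv.2, abs_sub_comm, abs_of_nonneg (by linarith)]
    · rw [dist_comm, key v u hv.1 h' (not_le.mp h).le hu.2, abs_of_nonneg (by linarith)]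
    · rw [hρ.dist_eq, Real.dist_eq]
  obtain ⟨γ, -, hγ⟩ := hU a c hac
  have e1 := hγ π ⟨hπ, by simp [hπdef, h0], by
    simp only [hπdef]; rw [if_neg (by linarith), ρ1]⟩
  have e2 := hγ ω ⟨hω.isGeodesicOn _, w0, w1⟩
  have hmem : dist a b ∈ Set.Icc 0 (dist a c) := ⟨hpab.le, by linarith⟩
  have hb : ω (dist a b) = b := by
    rw [e2 hmem, ← e1 hmem]
    simp [hπdef, h1]
  rw [line_unique hU hS hσ hω hpab (h0.trans w0.symm) (h1.trans hb.symm), w1]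

/-- A line through `a` in a nontrivial space, directed towards `x` when `x ≠ a`. -/
theorem exists_line' (hU : UniquelyGeodesic X) (hS : Straight X) [Nontrivial X] (a x : X) :
    ∃ σ : ℝ → X, Isometry σ ∧ σ 0 = a ∧ σ (dist a x) = x := by
  by_cases h : a = x
  · obtain ⟨y, hy⟩ := exists_ne a
    obtain ⟨σ, h1, h2, -⟩ := exists_line hU hS hy.symm
    exact ⟨σ, h1, h2, by rw [← h, dist_self, h2]⟩
  · exact exists_line hU hS h

end Lines

/-! ### Optimal points and optimal rays -/

section Optimal

/-- `p` is optimal for `ξ` from `b`: the function `ξ` decreases from `b` to `p` at the maximal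
possible rate for a 1-Lipschitz function. The optimal points of a horofunction are exactly the
points of its optimal ray based at `b`; those of `horo b₀ x` form the segment from `b` to `x`. -/
def IsOptimal (ξ : C(X, ℝ)) (b p : X) : Prop := ξ p = ξ b - dist b p

theorem lipschitz_of_mem {b : X} {ξ : C(X, ℝ)} (h : ξ ∈ closure (Set.range (horo b))) :
    LipschitzWith 1 ξ := (closure_horo_subset b h).1

theorem isOptimal_horo {b₀ x b p : X} :
    IsOptimal (horo b₀ x) b p ↔ dist b p + dist p x = dist b x := by
  simp only [IsOptimal, horo_apply, dist_comm x]
  constructor <;> intro h <;> linarith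

/-- Optimality passes to limits in all three arguments. -/
theorem isOptimal_of_tendsto {ι : Type*} {l : Filter ι} [NeBot l] {f : ι → C(X, ℝ)}
    {ξ : C(X, ℝ)} {c p : ι → X} {b q : X} (hf : Tendsto f l (𝓝 ξ))
    (hL : ∀ i, LipschitzWith 1 (f i)) (hc : Tendsto c l (𝓝 b)) (hp : Tendsto p l (𝓝 q))
    (h : ∀ᶠ i in l, IsOptimal (f i) (c i) (p i)) : IsOptimal ξ b q :=
  tendsto_nhds_unique_of_eventuallyEq (tendsto_eval hf hL hp)
    ((tendsto_eval hf hL hc).sub (hc.dist hp)) h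

/-- Extending the segments `[x, b]` beyond `b` and passing to the limit shows that every `b` is
the endpoint of a unit segment `[w, b]` along which `ξ` has slope `-1`. -/
theorem exists_behind [ProperSpace X] [Nontrivial X] (hU : UniquelyGeodesic X) (hS : Straight X)
    {b₀ : X} {ξ : C(X, ℝ)} (hξ : ξ ∈ closure (Set.range (horo b₀))) (b : X) :
    ∃ w, dist w b = 1 ∧ ξ w = ξ b + 1 := by
  obtain ⟨𝓤, h𝓤⟩ := exists_ultrafilter_horo hξ
  choose σ hσ h0 h1 using fun x => exists_line' hU hS b x
  have hd : ∀ x, dist b (σ x (-1)) = 1 := fun x => by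
    conv_lhs => rw [← h0 x]
    rw [(hσ x).dist_eq]; simp
  obtain ⟨w, hw⟩ := exists_tendsto_of_bounded 𝓤 (fun x => σ x (-1)) b 1
    (Eventually.of_forall fun x => (hd x).le)
  have hx : ∀ x, horo b₀ x (σ x (-1)) = horo b₀ x b + 1 := fun x => by
    have : dist x (σ x (-1)) = dist b x + 1 := by
      have := (hσ x).dist_eq (dist b x) (-1)
      rwa [h1, Real.dist_eq, sub_neg_eq_add, abs_of_nonneg (by positivity)] at this
    simp only [horo_apply, this, dist_comm x b]
    ring
  have e1 := tendsto_eval h𝓤 (lipschitz_horo b₀) hw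
  have e2 := (tendsto_eval h𝓤 (lipschitz_horo b₀) (tendsto_const_nhds (x := b))).add_const 1
  simp only [hx] at e1
  refine ⟨w, ?_, tendsto_nhds_unique e1 e2⟩
  have e3 := (tendsto_const_nhds (x := b)).dist hw
  simp only [hd] at e3
  rw [dist_comm]
  exact (tendsto_nhds_unique e3 tendsto_const_nhds)

/-- All optimal points from `b` lie on a single line through `b`. -/
theorem exists_optimal_line [ProperSpace X] [Nontrivial X] (hU : UniquelyGeodesic X)
    (hS : Straight X) {b₀ : X} {ξ : C(X, ℝ)} (hξ : ξ ∈ closure (Set.range (horo b₀))) (b : X) :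
    ∃ ζ : ℝ → X, Isometry ζ ∧ ζ 0 = b ∧ ∀ p, IsOptimal ξ b p → ζ (dist b p) = p := by
  obtain ⟨w, hw, hξw⟩ := exists_behind hU hS hξ b
  have hne : w ≠ b := dist_pos.mp (by rw [hw]; exact one_pos)
  obtain ⟨σ, hσ, h0, h1⟩ := exists_line hU hS hne
  refine ⟨fun u => σ (1 + u), isometry_shift hσ 1, by simpa [hw] using h1, fun p hp => ?_⟩
  -- `ξ` drops by `1 + dist b p` between `w` and `p`, so `b` lies between `w` and `p`
  have hd : dist w b + dist b p = dist w p := by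
    have e1 := (lipschitz_of_mem hξ).dist_le_mul w p
    have e2 := dist_triangle w b p
    rw [Real.dist_eq, hξw, hp] at e1
    have e3 := le_abs_self (ξ b + 1 - (ξ b - dist b p))
    simp only [NNReal.coe_one, one_mul] at e1
    linarith
  have := line_between hU hS hne hd hσ h0 h1
  rwa [← hd, hw] at this

/-- Optimality from `b` at a given distance determines the point. This is the uniqueness of the
optimal ray, and holds equally for the functions `horo b₀ x`. -/
theorem optimal_unique [ProperSpace X] [Nontrivial X] (hU : UniquelyGeodesic X)
    (hS : Straight X) {b₀ : X} {ξ : C(X, ℝ)} (hξ : ξ ∈ closure (Set.range (horo b₀)))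
    {b p q : X} (hp : IsOptimal ξ b p) (hq : IsOptimal ξ b q) (h : dist b p = dist b q) :
    p = q := by
  obtain ⟨ζ, -, -, hζ⟩ := exists_optimal_line hU hS hξ b
  rw [← hζ p hp, ← hζ q hq, h]

/-- A horofunction that is not some `horo b₀ x` is approached only by points escaping every ball. -/
theorem eventually_far [ProperSpace X] {b₀ : X} {ξ : C(X, ℝ)} (hξ : ξ ∉ Set.range (horo b₀))
    {𝓤 : Ultrafilter X} (h𝓤 : Tendsto (horo b₀) 𝓤 (𝓝 ξ)) (b : X) (R : ℝ) :
    ∀ᶠ x in (𝓤 : Filter X), R < dist b x := by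
  by_contra h
  rw [← Ultrafilter.eventually_not] at h
  obtain ⟨p, hp⟩ := exists_tendsto_of_bounded 𝓤 id b R (h.mono fun x hx => not_lt.mp hx)
  exact hξ ⟨p, tendsto_nhds_unique (((continuous_horo b₀).tendsto p).comp hp) h𝓤⟩

/-- Optimal points exist at every distance: they are limits of points of the segments `[b, x]` as
`x` escapes to infinity. -/
theorem exists_optimal_point [ProperSpace X] [Nontrivial X] (hU : UniquelyGeodesic X)
    (hS : Straight X) {b₀ : X} {ξ : C(X, ℝ)} (hξ : ξ ∈ closure (Set.range (horo b₀)))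
    (hξ' : ξ ∉ Set.range (horo b₀)) (b : X) {s : ℝ} (hs : 0 ≤ s) :
    ∃ p, dist b p = s ∧ IsOptimal ξ b p := by
  obtain ⟨𝓤, h𝓤⟩ := exists_ultrafilter_horo hξ
  choose σ hσ h0 h1 using fun x => exists_line' hU hS b x
  have hd : ∀ x, dist b (σ x s) = s := fun x => by
    conv_lhs => rw [← h0 x]
    rw [(hσ x).dist_eq, Real.dist_eq, zero_sub, abs_neg, abs_of_nonneg hs]
  obtain ⟨p, hp⟩ := exists_tendsto_of_bounded 𝓤 (fun x => σ x s) b s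
    (Eventually.of_forall fun x => (hd x).le)
  refine ⟨p, ?_, ?_⟩
  · have e3 := (tendsto_const_nhds (x := b)).dist hp
    simp only [hd] at e3
    exact (tendsto_nhds_unique e3 tendsto_const_nhds)
  · refine isOptimal_of_tendsto h𝓤 (lipschitz_horo b₀) tendsto_const_nhds hp ?_
    filter_upwards [eventually_far hξ' h𝓤 b s] with x hx
    rw [isOptimal_horo, hd]
    have : dist (σ x s) x = dist b x - s := by
      have := (hσ x).dist_eq s (dist b x)
      rwa [h1, Real.dist_eq, abs_sub_comm, abs_of_nonneg (by linarith)] at this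
    linarith

theorem exists_optimal_ray [ProperSpace X] [Nontrivial X] (hU : UniquelyGeodesic X)
    (hS : Straight X) {b₀ : X} {ξ : C(X, ℝ)} (hξ : ξ ∈ closure (Set.range (horo b₀)))
    (hξ' : ξ ∉ Set.range (horo b₀)) (b : X) :
    ∃ γ : GeodesicRay X b, ∀ t : ℝ≥0, ξ (γ.1 t) = ξ b - (t : ℝ) := by
  obtain ⟨ζ, hζ, h0, h⟩ := exists_optimal_line hU hS hξ b
  have hiso : Isometry fun t : ℝ≥0 => ζ t := hζ.comp isometry_subtype_coe
  refine ⟨⟨⟨fun t : ℝ≥0 => ζ t, hiso.continuous⟩, hiso, by simpa using h0⟩, fun t => ?_⟩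
  obtain ⟨p, hp, ho⟩ := exists_optimal_point hU hS hξ hξ' b t.2
  have := h p ho
  rw [hp] at this
  change ξ (ζ t) = _
  change ζ t = p at this
  rw [this, ho, hp]
  rfl

end Optimal

/-! ### Horofunctions are determined by their optimal rays -/

section Derivative

/-- By constant distance variation, the derivative of the distance to `x` along `γ` is that of the
distance to any other point `η s`, `s > 0`, on the line `η` from `γ t` to `x`. -/
theorem hasDerivAt_dist_line (hU : UniquelyGeodesic X) (hS : Straight X)
    (hC1 : C1AlongGeodesics X) (hCDV : ConstantDistanceVariation X) {γ η : ℝ → X}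
    (hγ : Isometry γ) (hη : Isometry η) {t s : ℝ} {x : X} (hs : 0 < s) (h0 : η 0 = γ t)
    (h1 : η (dist (γ t) x) = x) (hx : γ t ≠ x) (hy : η s ∉ Set.range γ) :
    HasDerivAt (fun u => dist (γ u) x) (deriv (fun u => dist (γ u) (η s)) t) t := by
  have hpos : 0 < dist (γ t) x := dist_pos.mpr hx
  have hxr : x ∉ Set.range γ := by
    rintro ⟨u, rfl⟩
    apply hy
    rw [hγ.dist_eq, Real.dist_eq] at h1 hpos
    rcases le_total t u with h | h
    · rw [abs_sub_comm, abs_of_nonneg (sub_nonneg.mpr h)] at h1 hpos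
      rw [line_unique hU hS hη (isometry_shift hγ t) hpos (by simp [h0]) (by simp [h1])]
      exact ⟨t + s, rfl⟩
    · rw [abs_of_nonneg (sub_nonneg.mpr h)] at h1 hpos
      rw [line_unique hU hS hη (isometry_reflect hγ t) hpos (by simp [h0]) (by simp [h1])]
      exact ⟨t - s, rfl⟩
  have hne : (fun u => γ (t + u)) ≠ η := fun h => hy ⟨t + s, congrFun h s⟩
  have hdiff : ∀ p ∉ Set.range γ, DifferentiableAt ℝ (fun u => dist (γ u) p) t :=
    fun p hp => (hC1 γ hγ).1 p hp t
  have hder := (hdiff x hxr).hasDerivAt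
  rcases hCDV _ η (isometry_shift hγ t) hη (by simp [h0]) hne with ⟨-, h⟩ | h
  · have e := h s (dist (γ t) x) hs hpos
    rw [h1, deriv_comp_const_add (f := fun u => dist (γ u) (η s)),
      deriv_comp_const_add (f := fun u => dist (γ u) x), add_zero] at e
    rwa [e]
  · refine absurd ?_ (h s hs)
    have := hdiff _ hy
    rw [← add_zero t] at this
    exact this.comp 0 (differentiableAt_id.const_add t)

/-- A horofunction is differentiable along `γ` wherever its optimal ray leaves `γ`, and the
derivative depends only on the point `q` of the optimal ray at distance `1`. -/
theorem hasDerivAt_horofunction [ProperSpace X] [Nontrivial X] (hU : UniquelyGeodesic X)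
    (hS : Straight X) (hC1 : C1AlongGeodesics X) (hCDV : ConstantDistanceVariation X) {b₀ : X}
    {ξ : C(X, ℝ)} (hξ : ξ ∈ closure (Set.range (horo b₀))) (hξ' : ξ ∉ Set.range (horo b₀))
    {γ : ℝ → X} (hγ : Isometry γ) {t₀ : ℝ} {q : X} (hq : IsOptimal ξ (γ t₀) q)
    (hq1 : dist (γ t₀) q = 1) (hqγ : q ∉ Set.range γ) :
    HasDerivAt (fun t => ξ (γ t)) (deriv (fun u => dist (γ u) q) t₀) t₀ := by
  obtain ⟨𝓤, h𝓤⟩ := exists_ultrafilter_horo hξ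
  choose σ hσ h0 h1 using fun a x : X => exists_line' hU hS a x
  set F : Filter (X × ℝ) := (𝓤 : Filter X) ×ˢ 𝓝 t₀ with hF
  have hfar : ∀ᶠ z in F, 1 < dist (γ z.2) z.1 := by
    have e1 := (eventually_far hξ' h𝓤 (γ t₀) 2).prod_inl (𝓝 t₀)
    have e2 : ∀ᶠ z : X × ℝ in F, z.2 ∈ Metric.ball t₀ 1 :=
      tendsto_snd (Metric.ball_mem_nhds t₀ one_pos)
    filter_upwards [e1, e2] with z hz1 hz2
    have := dist_triangle (γ t₀) (γ z.2) z.1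
    rw [hγ.dist_eq, dist_comm t₀] at this
    rw [Metric.mem_ball] at hz2
    linarith
  have hd : ∀ a x, dist a (σ a x 1) = 1 := fun a x => by
    have := (hσ a x).dist_eq 0 1
    rwa [h0, Real.dist_eq, zero_sub, abs_neg, abs_one] at this
  have hY : Tendsto (fun z : X × ℝ => σ (γ z.2) z.1 1) F (𝓝 q) := by
    rw [tendsto_iff_ultrafilter]
    intro 𝓥 h𝓥
    have hγt : Tendsto (fun z : X × ℝ => γ z.2) 𝓥 (𝓝 (γ t₀)) :=
      (hγ.continuous.tendsto t₀).comp (tendsto_snd.mono_left h𝓥)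
    have hh : Tendsto (fun z : X × ℝ => horo b₀ z.1) 𝓥 (𝓝 ξ) :=
      h𝓤.comp (tendsto_fst.mono_left h𝓥)
    obtain ⟨p, hp⟩ := exists_tendsto_of_bounded 𝓥 (fun z : X × ℝ => σ (γ z.2) z.1 1) (γ t₀) 2 (by
      filter_upwards [hγt (Metric.ball_mem_nhds _ one_pos)] with z hz
      have hz : dist (γ z.2) (γ t₀) < 1 := hz
      have := dist_triangle (γ t₀) (γ z.2) (σ (γ z.2) z.1 1)
      rw [hd, dist_comm (γ t₀) (γ z.2)] at this
      linarith)
    have hpo : IsOptimal ξ (γ t₀) p := by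
      refine isOptimal_of_tendsto hh (fun z => lipschitz_horo b₀ z.1) hγt hp ?_
      filter_upwards [h𝓥 hfar] with z hz
      have hz : 1 < dist (γ z.2) z.1 := hz
      rw [isOptimal_horo, hd]
      have := (hσ (γ z.2) z.1).dist_eq 1 (dist (γ z.2) z.1)
      rw [h1, Real.dist_eq, abs_sub_comm, abs_of_nonneg (by linarith)] at this
      linarith
    have hp1 : dist (γ t₀) p = 1 := by
      have e := hγt.dist hp
      simp only [hd] at e
      exact tendsto_nhds_unique e tendsto_const_nhds
    rwa [optimal_unique hU hS hξ hq hpo (hq1.trans hp1.symm)]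
  have hopen : IsOpen (Set.range γ)ᶜ := hγ.isClosedEmbedding.isClosed_range.isOpen_compl
  have hopen' : IsOpen {z : ℝ × X | z.2 ∉ Set.range γ} := hopen.preimage continuous_snd
  have hD : Tendsto (fun z : X × ℝ => deriv (fun u => dist (γ u) (σ (γ z.2) z.1 1)) z.2) F
      (𝓝 (deriv (fun u => dist (γ u) q) t₀)) := by
    have hca := (hC1 γ hγ).2.continuousAt (hopen'.mem_nhds (show (t₀, q) ∈ _ from hqγ))
    exact Tendsto.comp (f := fun z : X × ℝ => (z.2, σ (γ z.2) z.1 1)) hca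
      (tendsto_snd.prodMk_nhds hY)
  refine hasDerivAt_of_tendstoUniformlyOnFilter (l := (𝓤 : Filter X))
    (f := fun x t => horo b₀ x (γ t))
    (f' := fun x t => deriv (fun u => dist (γ u) (σ (γ t) x 1)) t)
    (g' := fun _ => deriv (fun u => dist (γ u) q) t₀)
    (tendsto_prod_filter_iff.mp hD) ?_ ?_
  · filter_upwards [hfar, hY (hopen.mem_nhds hqγ)] with z hz hzY
    have hne : γ z.2 ≠ z.1 := dist_pos.mp (one_pos.trans hz)
    have := hasDerivAt_dist_line hU hS hC1 hCDV hγ (hσ (γ z.2) z.1) one_pos (h0 _ _) (h1 _ _)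
      hne hzY
    simpa only [horo_apply, dist_comm z.1] using this.sub_const (dist b₀ z.1)
  · exact Eventually.of_forall fun t =>
      ((continuous_eval_const (γ t)).tendsto ξ).comp h𝓤

/-- If the optimal ray from `γ 0` runs along `γ` for unit time, it does so forever. -/
theorem slope_of_optimal [ProperSpace X] [Nontrivial X] (hU : UniquelyGeodesic X)
    (hS : Straight X) {b₀ : X} {ξ : C(X, ℝ)} (hξ : ξ ∈ closure (Set.range (horo b₀)))
    (hξ' : ξ ∉ Set.range (horo b₀)) {γ : ℝ → X} (hγ : Isometry γ)
    (hq : IsOptimal ξ (γ 0) (γ 1)) {s : ℝ} (hs : 0 ≤ s) : ξ (γ s) = ξ (γ 0) - s := by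
  obtain ⟨ζ, hζ, h0, h⟩ := exists_optimal_line hU hS hξ (γ 0)
  have e := h _ hq
  rw [hγ.dist_eq, Real.dist_eq, zero_sub, abs_neg, abs_one] at e
  obtain rfl := line_unique hU hS hζ hγ one_pos h0 e
  obtain ⟨p, hp, ho⟩ := exists_optimal_point hU hS hξ hξ' (ζ 0) hs
  have e' := h p ho
  rw [hp] at e'
  rw [e', ho, hp]

/-- Two horofunctions with the same optimal rays are equal. Their difference `g` along the line `γ`
from `b₀` to `y` is constant to the left of any parameter `t` at which the optimal ray points
backwards along `γ`, since both functions then have slope `1` on `(-∞, t]`. At every other parameter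
`g` has right derivative `0`: either the optimal ray points forwards along `γ`, or it leaves `γ` and
`hasDerivAt_horofunction` applies to both functions. -/
theorem eq_of_isOptimal_iff [ProperSpace X] [Nontrivial X] (hU : UniquelyGeodesic X)
    (hS : Straight X) (hC1 : C1AlongGeodesics X) (hCDV : ConstantDistanceVariation X) {b₀ : X}
    {ξ₁ ξ₂ : C(X, ℝ)} (m₁ : ξ₁ ∈ closure (Set.range (horo b₀)))
    (n₁ : ξ₁ ∉ Set.range (horo b₀)) (m₂ : ξ₂ ∈ closure (Set.range (horo b₀)))
    (n₂ : ξ₂ ∉ Set.range (horo b₀)) (h : ∀ b p, IsOptimal ξ₁ b p ↔ IsOptimal ξ₂ b p) :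
    ξ₁ = ξ₂ := by
  ext y
  have z₁ := (closure_horo_subset b₀ m₁).2
  have z₂ := (closure_horo_subset b₀ m₂).2
  obtain ⟨γ, hγ, h0, h1⟩ := exists_line' hU hS b₀ y
  set L := dist b₀ y with hL
  have hL0 : 0 ≤ L := dist_nonneg
  set g : ℝ → ℝ := fun t => ξ₁ (γ t) - ξ₂ (γ t) with hg
  have hgc : Continuous g :=
    (ξ₁.continuous.comp hγ.continuous).sub (ξ₂.continuous.comp hγ.continuous)
  suffices hgg : g L = g 0 by
    simp only [hg, h0, h1, z₁, z₂, sub_zero] at hgg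
    linarith
  -- the parameters where the optimal ray runs along `γ` in the negative direction
  set B : Set ℝ := {t | IsOptimal ξ₁ (γ t) (γ (t - 1))} with hB
  have hBclosed : IsClosed B := by
    refine isClosed_eq (ξ₁.continuous.comp (hγ.continuous.comp (by fun_prop))) ?_
    exact (ξ₁.continuous.comp hγ.continuous).sub
      (hγ.continuous.dist (hγ.continuous.comp (by fun_prop)))
  -- to the left of such a parameter both functions have slope `1`
  have hBconst : ∀ t ∈ B, ∀ u ≤ t, g u = g t := by
    intro t ht u hu
    have key : ∀ ξ : C(X, ℝ), ξ ∈ closure (Set.range (horo b₀)) → ξ ∉ Set.range (horo b₀) →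
        IsOptimal ξ (γ t) (γ (t - 1)) → ξ (γ u) = ξ (γ t) - (t - u) := fun ξ m n ho => by
      have := slope_of_optimal hU hS m n (isometry_reflect hγ t) (by simpa using ho)
        (sub_nonneg.mpr hu)
      simpa using this
    simp only [hg]
    rw [key ξ₁ m₁ n₁ ht, key ξ₂ m₂ n₂ ((h _ _).mp ht)]
    ring
  have hright : ∀ t ∉ B, HasDerivWithinAt g 0 (Set.Ici t) t := by
    intro t ht
    obtain ⟨q, hq1, hq⟩ := exists_optimal_point hU hS m₁ n₁ (γ t) zero_le_one
    by_cases hqγ : q ∈ Set.range γ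
    · obtain ⟨u, rfl⟩ := hqγ
      rw [hγ.dist_eq, Real.dist_eq] at hq1
      rcases (abs_eq zero_le_one).mp hq1 with e | e
      · exact absurd (by rw [hB, Set.mem_ofPred_eq, ← e, sub_sub_cancel]; exact hq) ht
      · have hu : u = t + 1 := by linarith
        rw [hu] at hq
        have key : ∀ ξ : C(X, ℝ), ξ ∈ closure (Set.range (horo b₀)) →
            ξ ∉ Set.range (horo b₀) → IsOptimal ξ (γ t) (γ (t + 1)) → ∀ v ∈ Set.Ici t,
            ξ (γ v) = ξ (γ t) - (v - t) := fun ξ m n ho v hv => by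
          have := slope_of_optimal hU hS m n (isometry_shift hγ t) (by simpa using ho)
            (sub_nonneg.mpr hv)
          simpa using this
        refine (hasDerivWithinAt_const t (Set.Ici t) (g t)).congr (fun v hv => ?_) rfl
        simp only [hg]
        rw [key ξ₁ m₁ n₁ hq v hv, key ξ₂ m₂ n₂ ((h _ _).mp hq) v hv]
        ring
    · have d₁ := hasDerivAt_horofunction hU hS hC1 hCDV m₁ n₁ hγ hq hq1 hqγ
      have d₂ := hasDerivAt_horofunction hU hS hC1 hCDV m₂ n₂ hγ ((h _ _).mp hq) hq1 hqγ
      have d := (d₁.sub d₂).hasDerivWithinAt (s := Set.Ici t)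
      rwa [sub_self] at d
  have hconst : ∀ s ≤ L, (∀ t ∈ Set.Ioc s L, t ∉ B) → ∀ u ∈ Set.Ioc s L, g L = g u := by
    intro s _ hsB u hu
    exact constant_of_has_deriv_right_zero hgc.continuousOn
      (fun t ht => hright t (hsB t ⟨hu.1.trans_le ht.1, ht.2.le⟩)) L ⟨hu.2, le_rfl⟩
  by_cases hne : (B ∩ Set.Icc 0 L).Nonempty
  · -- `s` is the last parameter of backward type
    have hcpt : IsCompact (B ∩ Set.Icc 0 L) := isCompact_Icc.inter_left hBclosed
    obtain ⟨s, ⟨hsB, hs0, hsL⟩, hmax⟩ := hcpt.exists_isGreatest hne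
    have e1 : g 0 = g s := hBconst s hsB 0 hs0
    rcases hsL.eq_or_lt with rfl | hlt
    · exact e1.symm
    have e2 : ∀ u ∈ Set.Ioc s L, g L = g u := hconst s hsL fun t ht htB =>
      absurd (hmax ⟨htB, hs0.trans ht.1.le, ht.2⟩) (not_le.mpr ht.1)
    have e3 : Tendsto g (𝓝[>] s) (𝓝 (g s)) := hgc.continuousWithinAt
    have e4 : Tendsto g (𝓝[>] s) (𝓝 (g L)) := by
      refine tendsto_const_nhds.congr' ?_
      filter_upwards [Ioc_mem_nhdsGT hlt] with u hu using e2 u hu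
    rw [tendsto_nhds_unique e4 e3, e1]
  · refine constant_of_has_deriv_right_zero hgc.continuousOn
      (fun t ht => hright t fun htB => hne ⟨t, htB, ht.1, ht.2.le⟩) L ⟨hL0, le_rfl⟩

end Derivative

/-! ### The topology of the visual compactification -/

section Visual

/-- The distance from `b`, as a `[0, ∞]`-valued function on the visual compactification. -/
def visRadius (b : X) : VisualCompactification X b → ℝ≥0∞ :=
  Quotient.lift Prod.snd (by
    rintro p q (rfl | ⟨h1, h2⟩)
    · rfl
    · rw [h1, h2])

/-- The point at distance `min r s` from `b` on the segment or ray from `b` represented by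
`(γ, r)`. -/
noncomputable def visPoint (b : X) (s : ℝ≥0) : VisualCompactification X b → X :=
  Quotient.lift (fun p => p.1.1 (min p.2 s).toNNReal) (by
    rintro p q (rfl | ⟨h1, h2⟩)
    · rfl
    · simp [h1, h2, p.1.2.2, q.1.2.2])

theorem visRadius_mk {b : X} (γ : GeodesicRay X b) (r : ℝ≥0∞) :
    visRadius b (Quotient.mk (collapseSetoid X b ℝ≥0∞) (γ, r)) = r := rfl

theorem visPoint_mk {b : X} (s : ℝ≥0) (γ : GeodesicRay X b) (r : ℝ≥0∞) :
    visPoint b s (Quotient.mk (collapseSetoid X b ℝ≥0∞) (γ, r)) = γ.1 (min r s).toNNReal := rfl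

theorem continuous_visRadius (b : X) : Continuous (visRadius b) :=
  continuous_snd.quotient_lift _

theorem continuous_visPoint (b : X) (s : ℝ≥0) : Continuous (visPoint b s) := by
  refine Continuous.quotient_lift ?_ _
  have h1 : Continuous fun p : GeodesicRay X b × ℝ≥0∞ => (min p.2 s).toNNReal :=
    ENNReal.continuousOn_toNNReal.comp_continuous (continuous_snd.min continuous_const)
      fun p => ne_top_of_le_ne_top ENNReal.coe_ne_top (min_le_right _ _)
  exact (continuous_subtype_val.comp continuous_fst).eval h1

theorem dist_ray {b : X} (γ : GeodesicRay X b) (t : ℝ≥0) : dist b (γ.1 t) = t := by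
  have h := γ.2.1.dist_eq 0 t
  rwa [γ.2.2, NNReal.dist_eq, NNReal.coe_zero, zero_sub, abs_neg, abs_of_nonneg t.coe_nonneg] at h

/-- A geodesic ray extends to a line. -/
theorem exists_line_of_ray (hU : UniquelyGeodesic X) (hS : Straight X) {b : X}
    (γ : GeodesicRay X b) : ∃ σ : ℝ → X, Isometry σ ∧ ∀ t : ℝ≥0, σ t = γ.1 t := by
  have hd : ∀ s t : ℝ≥0, dist (γ.1 s) (γ.1 t) = |(s : ℝ) - t| := fun s t => γ.2.1.dist_eq s t
  obtain ⟨σ, ⟨hσ, he⟩, -⟩ := hS (fun u => γ.1 u.toNNReal) 0 1 one_pos (by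
    intro u hu v hv
    rw [hd, Real.coe_toNNReal _ hu.1, Real.coe_toNNReal _ hv.1])
  refine ⟨σ, hσ, fun t => ?_⟩
  rcases le_total (t : ℝ) 1 with h | h
  · simpa using he ⟨t.2, h⟩
  · have e0 : σ 0 = γ.1 0 := by simpa using he (Set.left_mem_Icc.mpr zero_le_one)
    have e1 : σ 1 = γ.1 1 := by simpa using he (Set.right_mem_Icc.mpr zero_le_one)
    have d1 : dist (γ.1 0) (γ.1 1) = 1 := by rw [hd]; simp
    have d2 : dist (γ.1 1) (γ.1 t) = t - 1 := by
      rw [hd, abs_sub_comm, NNReal.coe_one, abs_of_nonneg (by linarith)]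
    have d3 : dist (γ.1 0) (γ.1 t) = t := by rw [hd]; simp
    have := line_between hU hS (c := γ.1 t) (dist_pos.mp (by rw [d1]; exact one_pos))
      (by rw [d1, d2, d3]; ring) hσ e0 (by rw [d1, e1])
    rwa [d3] at this

/-- Two rays from `b` with a common point at the same positive time coincide. -/
theorem ray_unique (hU : UniquelyGeodesic X) (hS : Straight X) {b : X} {γ η : GeodesicRay X b}
    {c : ℝ≥0} (hc : 0 < c) (h : γ.1 c = η.1 c) : γ = η := by
  obtain ⟨σ, hσ, e1⟩ := exists_line_of_ray hU hS γ
  obtain ⟨τ, hτ, e2⟩ := exists_line_of_ray hU hS η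
  have e0 : σ (0 : ℝ≥0) = τ (0 : ℝ≥0) := by rw [e1, e2, γ.2.2, η.2.2]
  obtain rfl := line_unique hU hS hσ hτ (NNReal.coe_lt_coe.mpr hc) e0 (by rw [e1, e2, h])
  ext t
  rw [← e1, e2]

/-- Radius and points at prescribed distance together realize the visual compactification as a
closed subspace of a product; it is compact and these functions separate its points. -/
theorem isClosedEmbedding_vis [ProperSpace X] (hU : UniquelyGeodesic X) (hS : Straight X)
    (b : X) : IsClosedEmbedding
      (fun v : VisualCompactification X b => (visRadius b v, fun s => visPoint b s v)) := by
  have := compactSpace_geodesicRay b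
  have hc : Continuous
      (fun v : VisualCompactification X b => (visRadius b v, fun s => visPoint b s v)) :=
    (continuous_visRadius b).prodMk (continuous_pi fun s => continuous_visPoint b s)
  refine hc.isClosedEmbedding ?_
  intro v w
  induction v using Quotient.ind with | _ p
  induction w using Quotient.ind with | _ q
  obtain ⟨γ, r⟩ := p
  obtain ⟨η, r'⟩ := q
  intro h
  obtain ⟨h1, h2⟩ := Prod.ext_iff.mp h
  dsimp only [visRadius_mk, visPoint_mk] at h1 h2
  subst h1
  apply Quotient.sound
  by_cases hr : r = 0
  · exact Or.inr ⟨hr, hr⟩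
  · left
    have h3 := congrFun h2 1
    have hpos : 0 < (min r ((1 : ℝ≥0) : ℝ≥0∞)).toNNReal := by
      refine ENNReal.toNNReal_pos (ne_of_gt ?_)
        (ne_top_of_le_ne_top ENNReal.coe_ne_top (min_le_right _ _))
      exact lt_min (pos_iff_ne_zero.mpr hr) (by simp)
    rw [ray_unique hU hS hpos h3]

/-- `v` is the value at `ξ` of the projection onto the visual compactification based at `b`: its
points are optimal for `ξ` from `b`, its radius is the distance from `b` to `x` if `ξ` is
`horo b₀ x`, and it is infinite if `ξ` is a horofunction. -/
def IsProjection (b₀ : X) (ξ : C(X, ℝ)) (b : X) (v : VisualCompactification X b) : Prop :=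
  (∀ s : ℝ≥0, dist b (visPoint b s v) = (min (visRadius b v) s).toReal ∧
      IsOptimal ξ b (visPoint b s v)) ∧
    (∀ x, ξ = horo b₀ x → visRadius b v = edist b x) ∧
      (ξ ∉ Set.range (horo b₀) → visRadius b v = ⊤)

theorem dist_visPoint {b : X} (s : ℝ≥0) (v : VisualCompactification X b) :
    dist b (visPoint b s v) = (min (visRadius b v) s).toReal := by
  induction v using Quotient.ind with | _ p
  obtain ⟨γ, r⟩ := p
  rw [visRadius_mk, visPoint_mk]
  exact dist_ray γ _

theorem isProjection_horo {b₀ x b : X} {γ : GeodesicRay X b} {r : ℝ≥0} (h : γ.1 r = x) :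
    IsProjection b₀ (horo b₀ x) b (Quotient.mk (collapseSetoid X b ℝ≥0∞) (γ, (r : ℝ≥0∞))) := by
  have hd : ∀ s t : ℝ≥0, dist (γ.1 s) (γ.1 t) = |(s : ℝ) - t| := fun s t => γ.2.1.dist_eq s t
  have hbx : edist b x = r := by
    rw [← h, edist_dist, dist_ray, ENNReal.ofReal_coe_nnreal]
  refine ⟨fun s => ⟨dist_visPoint s _, ?_⟩, ?_, fun hn => absurd ⟨x, rfl⟩ hn⟩
  · rw [isOptimal_horo, visPoint_mk, ← ENNReal.coe_min, ENNReal.toNNReal_coe, ← h,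
      dist_ray, dist_ray, hd]
    have : min r s ≤ r := min_le_left _ _
    have : ((min r s : ℝ≥0) : ℝ) ≤ r := NNReal.coe_le_coe.mpr this
    rw [abs_of_nonpos (by linarith)]
    ring
  · intro y hy
    rw [visRadius_mk, ← horo_injective b₀ hy, hbx]

theorem isProjection_boundary {b₀ b : X} {ξ : C(X, ℝ)} (hξ : ξ ∉ Set.range (horo b₀))
    {γ : GeodesicRay X b} (h : ∀ t : ℝ≥0, ξ (γ.1 t) = ξ b - (t : ℝ)) :
    IsProjection b₀ ξ b (Quotient.mk (collapseSetoid X b ℝ≥0∞) (γ, (⊤ : ℝ≥0∞))) := by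
  refine ⟨fun s => ⟨dist_visPoint s _, ?_⟩, fun x hx => absurd ⟨x, hx.symm⟩ hξ, fun _ => rfl⟩
  rw [IsOptimal, dist_visPoint, visPoint_mk, visRadius_mk, h]
  simp

/-- The projections are continuous: radii converge by properness, and the points at prescribed
distance converge because they are characterized by a closed condition with a unique solution. -/
theorem continuous_of_isProjection [ProperSpace X] [Nontrivial X] (hU : UniquelyGeodesic X)
    (hS : Straight X) {b₀ b : X}
    {P : {f : C(X, ℝ) // f ∈ closure (Set.range (horo b₀))} → VisualCompactification X b}
    (hP : ∀ ξ, IsProjection b₀ ξ.1 b (P ξ)) : Continuous P := by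
  set R : {f : C(X, ℝ) // f ∈ closure (Set.range (horo b₀))} → ℝ≥0∞ :=
    fun ξ => visRadius b (P ξ) with hR
  have hRc : Continuous R := by
    rw [continuous_iff_ultrafilter]
    intro ξ 𝓤 h𝓤
    have hval : Tendsto (fun η : {f : C(X, ℝ) // f ∈ closure (Set.range (horo b₀))} => η.1) 𝓤
        (𝓝 ξ.1) := (continuous_subtype_val.tendsto ξ).mono_left h𝓤
    obtain ⟨r, -, hr⟩ := isCompact_univ.ultrafilter_le_nhds (𝓤.map R) (by simp)
    have hr : Tendsto R 𝓤 (𝓝 r) := hr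
    suffices r = R ξ by rwa [← this]
    by_cases hrt : r = ⊤
    · subst hrt
      refine ((hP ξ).2.2 ?_).symm
      -- if `ξ = horo b₀ x`, a limit of optimal points would be optimal and farther than `x`
      rintro ⟨x, hx⟩
      set s : ℝ≥0 := nndist b x + 1 with hs
      have hsd : ∀ᶠ η in (𝓤 : Filter _), dist b (visPoint b s (P η)) = s := by
        filter_upwards [hr (lt_mem_nhds (ENNReal.coe_lt_top (r := s)))] with η hη
        have hη : (s : ℝ≥0∞) < visRadius b (P η) := hη
        rw [dist_visPoint, min_eq_right hη.le, ENNReal.coe_toReal]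
      obtain ⟨p, hp⟩ := exists_tendsto_of_bounded 𝓤 (fun η => visPoint b s (P η)) b s
        (hsd.mono fun _ h => h.le)
      have ho : IsOptimal ξ.1 b p := isOptimal_of_tendsto hval (fun η => lipschitz_of_mem η.2)
        tendsto_const_nhds hp (Eventually.of_forall fun η => ((hP η).1 s).2)
      have hdp : dist b p = s :=
        tendsto_nhds_unique (((tendsto_const_nhds (x := b)).dist hp).congr' hsd)
          tendsto_const_nhds
      rw [← hx, isOptimal_horo, hdp] at ho
      have : (s : ℝ) = dist b x + 1 := by simp [hs]
      linarith [dist_nonneg (x := p) (y := x)]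
    · have hk : ∀ η : {f : C(X, ℝ) // f ∈ closure (Set.range (horo b₀))},
          ∃ x, R η ≠ ⊤ → η.1 = horo b₀ x := by
        intro η
        by_cases h : η.1 ∈ Set.range (horo b₀)
        · exact ⟨h.choose, fun _ => h.choose_spec.symm⟩
        · exact ⟨b, fun h' => absurd ((hP η).2.2 h) h'⟩
      choose k hk using hk
      have hlt : r < r + 1 := ENNReal.lt_add_right hrt one_ne_zero
      have hfin : ∀ᶠ η in (𝓤 : Filter _), R η < r + 1 := hr (gt_mem_nhds hlt)
      have hRk : ∀ᶠ η in (𝓤 : Filter _), R η = edist b (k η) := by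
        filter_upwards [hfin] with η hη
        exact (hP η).2.1 _ (hk η hη.ne_top)
      obtain ⟨x, hx⟩ := exists_tendsto_of_bounded 𝓤 k b (r + 1).toReal (by
        filter_upwards [hfin, hRk] with η h1 h2
        rw [h2] at h1
        rw [dist_edist]
        exact ENNReal.toReal_mono (by simp [hrt]) h1.le)
      have hξx : ξ.1 = horo b₀ x := by
        refine tendsto_nhds_unique hval ?_
        refine (((continuous_horo b₀).tendsto x).comp hx).congr' ?_
        filter_upwards [hfin] with η hη
        exact (hk η hη.ne_top).symm
      have e : R ξ = edist b x := (hP ξ).2.1 x hξx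
      rw [e]
      exact tendsto_nhds_unique (hr.congr' hRk) (tendsto_const_nhds.edist hx)
  rw [(isClosedEmbedding_vis hU hS b).isInducing.continuous_iff]
  refine hRc.prodMk (continuous_pi fun s => ?_)
  rw [continuous_iff_ultrafilter]
  intro ξ 𝓤 h𝓤
  have hval : Tendsto (fun η : {f : C(X, ℝ) // f ∈ closure (Set.range (horo b₀))} => η.1) 𝓤
      (𝓝 ξ.1) := (continuous_subtype_val.tendsto ξ).mono_left h𝓤
  have hm : Continuous fun η => (min (R η) s).toReal :=
    ENNReal.continuousOn_toReal.comp_continuous (hRc.min continuous_const)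
      fun p => ne_top_of_le_ne_top ENNReal.coe_ne_top (min_le_right _ _)
  have hd : ∀ η, dist b (visPoint b s (P η)) = (min (R η) s).toReal := fun η => dist_visPoint s _
  obtain ⟨p, hp⟩ := exists_tendsto_of_bounded 𝓤 (fun η => visPoint b s (P η)) b s
    (Eventually.of_forall fun η => by
      rw [hd]
      exact ENNReal.toReal_mono ENNReal.coe_ne_top (min_le_right _ _))
  have ho : IsOptimal ξ.1 b p := isOptimal_of_tendsto hval (fun η => lipschitz_of_mem η.2)
    tendsto_const_nhds hp (Eventually.of_forall fun η => ((hP η).1 s).2)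
  have hdp : dist b p = (min (R ξ) s).toReal := by
    have e := (tendsto_const_nhds (x := b)).dist hp
    simp only [hd] at e
    exact tendsto_nhds_unique e ((hm.tendsto ξ).mono_left h𝓤)
  have hpe : visPoint b s (P ξ) = p :=
    optimal_unique hU hS ξ.2 ((hP ξ).1 s).2 ho ((hd ξ).trans hdp.symm)
  change Tendsto (fun η => visPoint b s (P η)) 𝓤 (𝓝 (visPoint b s (P ξ)))
  rw [hpe]
  exact hp

end Visual

/-- Let `i : X → ∏_b X̄_b` be the diagonal embedding into the product of all the
visual compactifications, and let `F̂` be the map from the horofunction compactification to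
the product whose `b`-th component is the projection `Π_b` (sending `h x` to the image of `x`
and a horofunction to the boundary point of its optimal geodesic ray based at `b`). Then `F̂`
is a homeomorphism onto the closure of `i(X)`; in particular the two compactifications are
isomorphic. -/
theorem statement19 [ProperSpace X] (hU : UniquelyGeodesic X) (hS : Straight X)
    (hC1 : C1AlongGeodesics X) (hCDV : ConstantDistanceVariation X)
    (b₀ : X)
    (i : X → ∀ b : X, VisualCompactification X b)
    (hi : ∀ (b x : X) (γ : GeodesicRay X b) (r : ℝ≥0), γ.1 r = x →
      i x b = Quotient.mk (collapseSetoid X b ℝ≥0∞) (γ, (r : ℝ≥0∞)))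
    (Fhat : {f : C(X, ℝ) // f ∈ closure (Set.range (horo b₀))} →
      ∀ b : X, VisualCompactification X b)
    (hF1 : ∀ (x : X) (hx : horo b₀ x ∈ closure (Set.range (horo b₀))),
      Fhat ⟨horo b₀ x, hx⟩ = i x)
    (hF2 : ∀ (ξ : C(X, ℝ)) (hξ : ξ ∈ closure (Set.range (horo b₀))),
      ξ ∉ Set.range (horo b₀) →
      ∀ (b : X) (γ : GeodesicRay X b), (∀ t : ℝ≥0, ξ (γ.1 t) = ξ b - (t : ℝ)) →
        Fhat ⟨ξ, hξ⟩ b = Quotient.mk (collapseSetoid X b ℝ≥0∞) (γ, (⊤ : ℝ≥0∞))) :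
    Topology.IsEmbedding Fhat ∧ Set.range Fhat = closure (Set.range i) := by
  have hray : ∀ b, Nonempty (GeodesicRay X b) := fun b => by
    obtain ⟨p, -⟩ := Quotient.exists_rep (i b₀ b)
    exact ⟨p.1⟩
  have : Nontrivial X := by
    obtain ⟨γ⟩ := hray b₀
    exact ⟨γ.1 0, γ.1 1, fun h => zero_ne_one (γ.2.1.injective h)⟩
  have hi' : ∀ b x, IsProjection b₀ (horo b₀ x) b (i x b) := by
    intro b x
    obtain ⟨σ, hσ, h0, h1⟩ := exists_line' hU hS b x
    have hiso : Isometry fun t : ℝ≥0 => σ t := hσ.comp isometry_subtype_coe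
    have hx : (⟨⟨fun t : ℝ≥0 => σ t, hiso.continuous⟩, hiso, by simpa using h0⟩ :
        GeodesicRay X b).1 (nndist b x) = x := h1
    rw [hi b x _ _ hx]
    exact isProjection_horo hx
  have hF : ∀ b ξ, IsProjection b₀ ξ.1 b (Fhat ξ b) := by
    rintro b ⟨ξ, hξ⟩
    by_cases h : ξ ∈ Set.range (horo b₀)
    · obtain ⟨x, rfl⟩ := h
      rw [hF1 x hξ]
      exact hi' b x
    · obtain ⟨γ, hγ⟩ := exists_optimal_ray hU hS hξ h b
      rw [hF2 ξ hξ h b γ hγ]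
      exact isProjection_boundary h hγ
  have hcont : Continuous Fhat :=
    continuous_pi fun b => continuous_of_isProjection hU hS (hF b)
  have hinj : Function.Injective Fhat := by
    intro ξ η h
    by_cases hξ : ξ.1 ∈ Set.range (horo b₀)
    · obtain ⟨x, hx⟩ := hξ
      -- the component at `x` has radius `0`
      have e1 : visRadius x (Fhat ξ x) = 0 := by rw [(hF x ξ).2.1 x hx.symm, edist_self]
      rw [h] at e1
      by_cases hη : η.1 ∈ Set.range (horo b₀)
      · obtain ⟨y, hy⟩ := hη
        rw [(hF x η).2.1 y hy.symm, edist_eq_zero] at e1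
        exact Subtype.ext (by rw [← hx, ← hy, e1])
      · rw [(hF x η).2.2 hη] at e1
        exact absurd e1 ENNReal.top_ne_zero
    · have e1 : ∀ b, visRadius b (Fhat ξ b) = ⊤ := fun b => (hF b ξ).2.2 hξ
      have hη : η.1 ∉ Set.range (horo b₀) := by
        rintro ⟨y, hy⟩
        have := e1 b₀
        rw [h, (hF b₀ η).2.1 y hy.symm] at this
        exact edist_ne_top _ _ this
      -- an optimal point is the point of the common optimal ray at the same distance from `b`
      have key : ∀ ζ : {f : C(X, ℝ) // f ∈ closure (Set.range (horo b₀))},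
          (∀ b, visRadius b (Fhat ζ b) = ⊤) → ∀ b p, IsOptimal ζ.1 b p →
            visPoint b (nndist b p) (Fhat ζ b) = p := fun ζ hζ b p hp => by
        refine optimal_unique hU hS ζ.2 ((hF b ζ).1 _).2 hp ?_
        rw [dist_visPoint, hζ b]
        simp [dist_edist]
      have e2 : ∀ b, visRadius b (Fhat η b) = ⊤ := fun b => (hF b η).2.2 hη
      refine Subtype.ext (eq_of_isOptimal_iff hU hS hC1 hCDV ξ.2 hξ η.2 hη fun b p => ⟨?_, ?_⟩)
      · intro hp
        have := key ξ e1 b p hp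
        rw [h] at this
        rw [← this]
        exact ((hF b η).1 _).2
      · intro hp
        have := key η e2 b p hp
        rw [← h] at this
        rw [← this]
        exact ((hF b ξ).1 _).2
  have := compactSpace_horo b₀
  have hT2 : ∀ b, T2Space (VisualCompactification X b) := fun b =>
    (isClosedEmbedding_vis hU hS b).isEmbedding.t2Space
  have hemb : IsClosedEmbedding Fhat := hcont.isClosedEmbedding hinj
  refine ⟨hemb.isEmbedding, Set.Subset.antisymm ?_ ?_⟩
  · rintro _ ⟨⟨ξ, hξ⟩, rfl⟩
    obtain ⟨𝓤, h𝓤⟩ := exists_ultrafilter_horo hξ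
    have hlift : Tendsto (fun x => (⟨horo b₀ x, subset_closure ⟨x, rfl⟩⟩ :
        {f : C(X, ℝ) // f ∈ closure (Set.range (horo b₀))})) 𝓤 (𝓝 ⟨ξ, hξ⟩) :=
      tendsto_subtype_rng.mpr h𝓤
    exact mem_closure_of_tendsto ((hcont.tendsto _).comp hlift)
      (Eventually.of_forall fun x => ⟨x, (hF1 x _).symm⟩)
  · refine closure_minimal ?_ hemb.isClosed_range
    rintro _ ⟨x, rfl⟩
    exact ⟨⟨horo b₀ x, subset_closure ⟨x, rfl⟩⟩, hF1 x _⟩
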